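/- arXiv:2411.11261 — 2 statements merged into one kernel-verified Lean document; each statement's English description precedes it below -/
import Mathlib

section
/- There is no 4-dimensional subspace 𝔳 of 𝔭 such that R(X,Y)Z ∈ 𝔳 and (∇_V R)(X,Y,Z) ∈ 𝔳 for all X, Y, Z, V ∈ 𝔳. (Algebraic core of: the homogeneous nearly Kähler flag manifold F(ℂ³) admits no codimension-two totally geodesic submanifolds.) -/
/- Setup: the homogeneous nearly Kähler flag manifold F(ℂ³) = SU(3)/T². -/

noncomputable section
open Matrix

abbrev M3 := Matrix (Fin 3) (Fin 3) ℂ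

def e1 : M3 := (Real.sqrt 2)⁻¹ • !![0, 1, 0; -1, 0, 0; 0, 0, 0]
def e2 : M3 := (Real.sqrt 2)⁻¹ • !![0, Complex.I, 0; Complex.I, 0, 0; 0, 0, 0]
def e3 : M3 := (Real.sqrt 2)⁻¹ • !![0, 0, 0; 0, 0, 1; 0, -1, 0]
def e4 : M3 := (Real.sqrt 2)⁻¹ • !![0, 0, 0; 0, 0, Complex.I; 0, Complex.I, 0]
def e5 : M3 := (Real.sqrt 2)⁻¹ • !![0, 0, 1; 0, 0, 0; -1, 0, 0]
def e6 : M3 := (Real.sqrt 2)⁻¹ • !![0, 0, Complex.I; 0, 0, 0; Complex.I, 0, 0]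

/-- `𝔱`, the subalgebra of diagonal matrices in `𝔰𝔲(3)`. -/
def tAlg : Submodule ℝ M3 :=
  Submodule.span ℝ
    {Matrix.diagonal ![Complex.I, -Complex.I, 0], Matrix.diagonal ![0, Complex.I, -Complex.I]}

/-- `𝔭`, the orthogonal complement of `𝔱` in `𝔰𝔲(3)`. -/
def pAlg : Submodule ℝ M3 := Submodule.span ℝ {e1, e2, e3, e4, e5, e6}

/-- `𝔤 = 𝔰𝔲(3) = 𝔱 ⊕ 𝔭`. -/
def gAlg : Submodule ℝ M3 := tAlg ⊔ pAlg

/-- difference tensor `D_X Y = (1/2)[X,Y]_𝔭`. -/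
def Dmap (πp : M3 → M3) (X Y : M3) : M3 := (2 : ℝ)⁻¹ • πp ⁅X, Y⁆

/-- curvature tensor
`R(X,Y)Z = D_X D_Y Z − D_Y D_X Z − [[X,Y]_𝔱, Z] − D_{[X,Y]_𝔭} Z`. -/
def Rmap (πt πp : M3 → M3) (X Y Z : M3) : M3 :=
  Dmap πp X (Dmap πp Y Z) - Dmap πp Y (Dmap πp X Z) - ⁅πt ⁅X, Y⁆, Z⁆
    - Dmap πp (πp ⁅X, Y⁆) Z

/-- covariant derivative of the curvature,
`(∇_V R)(X,Y,Z) = D_V(R(X,Y)Z) − R(D_V X,Y)Z − R(X,D_V Y)Z − R(X,Y)(D_V Z)`. -/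
def nablaR (πt πp : M3 → M3) (V X Y Z : M3) : M3 :=
  Dmap πp V (Rmap πt πp X Y Z) - Rmap πt πp (Dmap πp V X) Y Z
    - Rmap πt πp X (Dmap πp V Y) Z - Rmap πt πp X Y (Dmap πp V Z)

/-!
Identify `𝔭` with `ℂ³` by the entries `12`, `23`, `31`. Then `[u, w]_𝔭 = -conj (u × w)`, while `𝔱` acts
diagonally with imaginary weights, so `R` and `∇R` become explicit polynomial expressions. Let `V ⊆ ℂ³`
be an invariant real subspace of dimension 4. For dimension reasons `V ∩ iV ≠ 0`, and for `u ∈ V ∩ iV`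
the operator `R(u, iu)` shows that `i diag(|u|² - 4|u_j|²)` preserves `V` (`skew_diag_mem`).

Suppose `V ∩ iV` is a complex line `ℂ u`. Then `u` is an eigenvector of that operator, so the nonzero
`|u_j|` are all equal. If one or three coordinates of `u` are nonzero, the operator is a multiple of `i`
modulo `ℂ u` and `V` is complex. If two are nonzero, it is a multiple of `J = i diag(-1, -1, 1)` up to
order, and looking at `R(w, Jw) w` for `w ∈ V` orthogonal to `u` shows again that `V` is complex
(`complex_of_line`). A complex subspace has `V ∩ iV = V`, of complex dimension 2, so the line case does
not occur.

Hence `V` is a complex plane `n · z = 0`. For `u ∈ V` the normal component of `(∇_u R)(u, iu, n × ū)` is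
a nonzero multiple of `|n|² ((∑ |u_k|²)² - 2 ∑ |u_k|⁴)` (`complex_case_identity`). It vanishes on all of
`V` only if `n = 0`: the vectors of `V` with a zero coordinate force `|n₀| = |n₁| = |n₂|`, and a
combination of two of them violates the identity (`complex_case`).
-/

open Complex ComplexConjugate

/-! ### The curvature tensor in complex coordinates -/

/-- The model `ℂ³` of `𝔭`. -/
abbrev C3 := Fin 3 → ℂ

/-- The identification of `ℂ³` with `𝔭`. The coordinates are the matrix entries at the cyclically
ordered positions `12`, `23`, `31`, which makes the bracket on `𝔭` a cross product. -/
def toM (u : C3) : M3 :=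
  !![0, u 0, -conj (u 2); -conj (u 0), 0, u 1; u 2, -conj (u 1), 0]

/-- The operator `D` in the model: `D_u w = -½ conj (u × w)`. -/
def dC (u w : C3) : C3 := fun j => -(1 / 2) * conj ((u ⨯₃ w) j)

/-- The `j`-th coordinate of the imaginary weight by which `[u, w]_𝔱` acts on `ℂ³ ≅ 𝔭`. -/
def tC (u w : C3) (j : Fin 3) : ℂ :=
  (∑ k, (u k * conj (w k) - conj (u k) * w k)) - 3 * (u j * conj (w j) - conj (u j) * w j)

/-- The curvature tensor in the model. -/
def rC (u w z : C3) : C3 :=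
  dC u (dC w z) - dC w (dC u z) - (fun j => tC u w j * z j) - dC ((2 : ℝ) • dC u w) z

/-- The covariant derivative `(∇_v R)(x, y, z)` in the model. -/
def nC (v x y z : C3) : C3 :=
  dC v (rC x y z) - rC (dC v x) y z - rC x (dC v y) z - rC x y (dC v z)

lemma rC_J (u z : C3) : rC u (I • u) z = fun j =>
    I * (3 / 2 * (∑ k, u k * conj (u k)) * z j + 1 / 2 * (∑ k, conj (u k) * z k) * u j
      - 6 * (u j * conj (u j)) * z j) := by
  ext j
  fin_cases j <;> simp [rC, dC, tC, cross_apply, Fin.sum_univ_three, map_ofNat] <;> ring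

lemma dC_self (u : C3) (c : ℂ) : dC u (c • u) = 0 := by
  ext j
  fin_cases j <;> simp [dC]

/-- Since `D_u u = D_u (i u) = 0`, two of the four terms of `(∇_u R)(u, iu, z)` vanish. -/
lemma nC_J (u z : C3) : nC u u (I • u) z = dC u (rC u (I • u) z) - rC u (I • u) (dC u z) := by
  have h : dC u u = 0 := by simpa using dC_self u 1
  ext j
  rw [nC, dC_self, h]
  fin_cases j <;> simp [rC, dC, tC, cross_apply, Fin.sum_univ_three]

/-- The `𝔱`-component of `[toM u, toM w]`. -/
def tM (u w : C3) : M3 := Matrix.diagonal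
  ![-(u 0 * conj (w 0) - conj (u 0) * w 0) + (u 2 * conj (w 2) - conj (u 2) * w 2),
    -(u 1 * conj (w 1) - conj (u 1) * w 1) + (u 0 * conj (w 0) - conj (u 0) * w 0),
    -(u 2 * conj (w 2) - conj (u 2) * w 2) + (u 1 * conj (w 1) - conj (u 1) * w 1)]

lemma bracket_toM (u w : C3) : ⁅toM u, toM w⁆ = tM u w + toM ((2 : ℝ) • dC u w) := by
  ext i j
  fin_cases i <;> fin_cases j <;>
    simp [Ring.lie_def, toM, tM, dC, cross_apply] <;> ring

lemma bracket_tM (u w z : C3) : ⁅tM u w, toM z⁆ = toM (fun j => tC u w j * z j) := by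
  ext i j
  rw [Ring.lie_def, tM, Matrix.sub_apply, Matrix.diagonal_mul, Matrix.mul_diagonal]
  fin_cases i <;> fin_cases j <;>
    simp [toM, tC, Fin.sum_univ_three, map_ofNat] <;> ring

/-- `toM` as a real-linear map. -/
def toML : C3 →ₗ[ℝ] M3 where
  toFun := toM
  map_add' u w := by
    ext i j; fin_cases i <;> fin_cases j <;> simp [toM] <;> ring
  map_smul' c u := by
    ext i j; fin_cases i <;> fin_cases j <;> simp [toM]

lemma toML_inj : Function.Injective toML := by
  intro u w h
  have hconj : toM u = toM w := h
  ext j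
  fin_cases j
  · simpa [toM] using congrFun (congrFun hconj 0) 1
  · simpa [toM] using congrFun (congrFun hconj 1) 2
  · simpa [toM] using congrFun (congrFun hconj 2) 0

lemma range_toML : LinearMap.range toML = pAlg := by
  apply le_antisymm
  · rintro _ ⟨u, rfl⟩
    have h2 : Real.sqrt 2 ≠ 0 := by positivity
    have h : toML u = (Real.sqrt 2 * (u 0).re) • e1 + (Real.sqrt 2 * (u 0).im) • e2
        + (Real.sqrt 2 * (u 1).re) • e3 + (Real.sqrt 2 * (u 1).im) • e4
        + (-(Real.sqrt 2 * (u 2).re)) • e5 + (Real.sqrt 2 * (u 2).im) • e6 := by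
      change toM u = _
      ext i j
      fin_cases i <;> fin_cases j <;> apply Complex.ext <;>
        simp [toM, e1, e2, e3, e4, e5, e6] <;> field_simp <;> norm_num
    rw [h]
    have m : ∀ e ∈ ({e1, e2, e3, e4, e5, e6} : Set M3), e ∈ pAlg :=
      fun e he => Submodule.subset_span he
    refine add_mem (add_mem (add_mem (add_mem (add_mem ?_ ?_) ?_) ?_) ?_) ?_ <;>
      exact Submodule.smul_mem _ _ (m _ (by simp))
  · refine Submodule.span_le.2 ?_
    have key : ∀ u : C3, toM u ∈ LinearMap.range toML := fun u => ⟨u, rfl⟩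
    have hs : ∀ u : C3, (Real.sqrt 2)⁻¹ • toM u ∈ LinearMap.range toML :=
      fun u => Submodule.smul_mem _ _ (key u)
    rintro e (rfl | rfl | rfl | rfl | rfl | rfl)
    · convert hs ![1, 0, 0] using 2; simp [e1, toM]
    · convert hs ![I, 0, 0] using 2; simp [e2, toM]
    · convert hs ![0, 1, 0] using 2; simp [e3, toM]
    · convert hs ![0, I, 0] using 2; simp [e4, toM]
    · convert hs ![0, 0, -1] using 2; simp [e5, toM]
    · convert hs ![0, 0, I] using 2; simp [e6, toM]

lemma tM_mem (u w : C3) : tM u w ∈ tAlg := by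
  have h : tM u w =
      (2 * (-(u 0 * conj (w 0)).im + (u 2 * conj (w 2)).im)) •
        Matrix.diagonal ![I, -I, 0] +
      (-2 * (-(u 2 * conj (w 2)).im + (u 1 * conj (w 1)).im)) •
        Matrix.diagonal ![0, I, -I] := by
    ext i j
    fin_cases i <;> fin_cases j <;> apply Complex.ext <;> simp [tM] <;> ring
  rw [h]
  exact add_mem (Submodule.smul_mem _ _ (Submodule.subset_span (by simp)))
    (Submodule.smul_mem _ _ (Submodule.subset_span (by simp)))

lemma tAlg_offdiag {T : M3} (hT : T ∈ tAlg) : ∀ i j, i ≠ j → T i j = 0 := by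
  intro i j hij
  induction hT using Submodule.span_induction with
  | mem x hx => rcases hx with rfl | rfl <;> exact Matrix.diagonal_apply_ne _ hij
  | zero => rfl
  | add x y _ _ hx hy => simp [hx, hy]
  | smul a x _ hx => simp [hx]

/-- The sum `𝔱 + 𝔭` is direct, so the hypothesis on `πt`, `πp` determines them on `𝔤`. -/
lemma proj_eq {πt πp : M3 → M3}
    (hdec : ∀ Z ∈ gAlg, πt Z ∈ tAlg ∧ πp Z ∈ pAlg ∧ πt Z + πp Z = Z)
    {T : M3} (hT : T ∈ tAlg) (u : C3) :
    πt (T + toM u) = T ∧ πp (T + toM u) = toM u := by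
  have hP : toM u ∈ pAlg := range_toML ▸ ⟨u, rfl⟩
  obtain ⟨h1, h2, h3⟩ := hdec _ (Submodule.add_mem_sup hT hP)
  rw [← range_toML] at h2
  obtain ⟨w, hw⟩ := h2
  rw [← hw] at h3 ⊢
  change _ + toM w = _ at h3
  have hz : ∀ i j, i ≠ j → toM w i j = toM u i j := fun i j hij => by
    have := congrFun (congrFun h3 i) j
    simpa [tAlg_offdiag hT i j hij, tAlg_offdiag h1 i j hij] using this
  have hwu : w = u := by
    ext j
    fin_cases j
    · simpa [toM] using hz 0 1 (by decide)
    · simpa [toM] using hz 1 2 (by decide)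
    · simpa [toM] using hz 2 0 (by decide)
  subst hwu
  exact ⟨add_right_cancel h3, rfl⟩

lemma Dmap_toM {πt πp : M3 → M3}
    (hdec : ∀ Z ∈ gAlg, πt Z ∈ tAlg ∧ πp Z ∈ pAlg ∧ πt Z + πp Z = Z) (u w : C3) :
    Dmap πp (toM u) (toM w) = toM (dC u w) := by
  rw [Dmap, bracket_toM, (proj_eq hdec (tM_mem u w) _).2]
  change (2 : ℝ)⁻¹ • toML _ = toML _
  rw [← map_smul, smul_smul]
  norm_num

lemma Rmap_toM {πt πp : M3 → M3}
    (hdec : ∀ Z ∈ gAlg, πt Z ∈ tAlg ∧ πp Z ∈ pAlg ∧ πt Z + πp Z = Z) (u w z : C3) :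
    Rmap πt πp (toM u) (toM w) (toM z) = toM (rC u w z) := by
  have h := proj_eq hdec (tM_mem u w) ((2 : ℝ) • dC u w)
  rw [Rmap, bracket_toM, h.1, h.2, bracket_tM]
  simp only [Dmap_toM hdec]
  exact ((map_sub toML _ _).trans (by rw [map_sub, map_sub]; rfl)).symm

lemma nablaR_toM {πt πp : M3 → M3}
    (hdec : ∀ Z ∈ gAlg, πt Z ∈ tAlg ∧ πp Z ∈ pAlg ∧ πt Z + πp Z = Z) (v u w z : C3) :
    nablaR πt πp (toM v) (toM u) (toM w) (toM z) = toM (nC v u w z) := by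
  simp only [nablaR, Dmap_toM hdec, Rmap_toM hdec]
  exact ((map_sub toML _ _).trans (by rw [map_sub, map_sub]; rfl)).symm

/-! ### Complex planes -/

lemma smul_mem_of_J {V : Submodule ℝ C3} {u : C3} (hu : u ∈ V) (hiu : I • u ∈ V) (c : ℂ) :
    c • u ∈ V := by
  have h : c • u = c.re • u + c.im • (I • u) := by
    ext j
    have := Complex.re_add_im c
    simp only [Pi.smul_apply, Pi.add_apply, smul_eq_mul, Complex.real_smul]
    linear_combination (-u j) * this
  rw [h]
  exact add_mem (V.smul_mem _ hu) (V.smul_mem _ hiu)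

/-- The squared Hermitian norm on `ℂ³`. -/
def nrm (u : C3) : ℝ := ∑ k, normSq (u k)

/-- If `V` contains the complex line of `u`, then invariance under `R(u, iu)` means that the diagonal
operator `i (|u|² - 4 |u_j|²)_j` preserves `V`: the remaining term of `R(u, iu) z` lies in `ℂ u`. -/
lemma skew_diag_mem {V : Submodule ℝ C3}
    (hR : ∀ x ∈ V, ∀ y ∈ V, ∀ z ∈ V, rC x y z ∈ V)
    {u : C3} (hu : u ∈ V) (hiu : I • u ∈ V) {z : C3} (hz : z ∈ V) :
    (fun j => I * (((nrm u - 4 * normSq (u j) : ℝ) : ℂ) * z j)) ∈ V := by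
  have h1 := hR u hu _ hiu z hz
  have h2 := smul_mem_of_J hu hiu (I * (1 / 2) * ∑ k, conj (u k) * z k)
  convert V.smul_mem (2 / 3 : ℝ) (sub_mem h1 h2) using 1
  ext j
  rw [rC_J]
  simp only [nrm, Pi.smul_apply, Pi.sub_apply, smul_eq_mul, Complex.real_smul, mul_conj]
  push_cast
  ring

/-- For `u` in the plane `n · u = 0`, the vector `n × ū` spans the Hermitian complement of `u` in
that plane, and `D_u` maps it to a multiple of the normal vector `n̄`. -/
lemma dC_cross {n u : C3} (h : n ⬝ᵥ u = 0) :
    dC u (n ⨯₃ star u) = -(1 / 2 * nrm u : ℂ) • star n := by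
  rw [vec3_dotProduct] at h
  have hconj := congrArg conj h
  simp only [map_add, map_mul, map_zero] at hconj
  have hN : (nrm u : ℂ) = u 0 * conj (u 0) + u 1 * conj (u 1) + u 2 * conj (u 2) := by
    simp [nrm, Fin.sum_univ_three, mul_conj]
  rw [hN]
  ext j
  fin_cases j <;> simp [dC, cross_apply]
  · linear_combination (-1 / 2 * u 0) * hconj
  · linear_combination (-1 / 2 * u 1) * hconj
  · linear_combination (-1 / 2 * u 2) * hconj

set_option maxHeartbeats 1000000 in
/-- The normal component of `(∇_u R)(u, iu, n × ū)` along the complex plane `n · z = 0`. -/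
lemma complex_case_identity {n u : C3} (h : n ⬝ᵥ u = 0) :
    n ⬝ᵥ nC u u (I • u) (n ⨯₃ star u) =
      -(3 / 2) * I * ((nrm n * (nrm u ^ 2 - 2 * ∑ k, normSq (u k) ^ 2) : ℝ) : ℂ) := by
  rw [nC_J, dC_cross h, rC_J, rC_J]
  rw [vec3_dotProduct] at h
  have hconj := congrArg conj h
  simp only [map_add, map_mul, map_zero] at hconj
  have hN : ∀ v : C3, (nrm v : ℂ) = v 0 * conj (v 0) + v 1 * conj (v 1) + v 2 * conj (v 2) := by
    intro v
    simp [nrm, Fin.sum_univ_three, mul_conj]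
  push_cast
  simp only [hN, ← mul_conj, Fin.sum_univ_three, vec3_dotProduct, dC, cross_apply, Pi.sub_apply,
    Pi.smul_apply, Pi.star_apply, Matrix.cons_val, RCLike.star_def, smul_eq_mul, map_mul, map_sub,
    map_add, conj_conj, conj_I, map_ofNat, map_div₀, map_one, neg_mul]
  generalize conj (u 0) = a0 at *
  generalize conj (u 1) = a1 at *
  generalize conj (u 2) = a2 at *
  generalize conj (n 0) = m0 at *
  generalize conj (n 1) = m1 at *
  generalize conj (n 2) = m2 at *
  generalize u 0 = u0 at *
  generalize u 1 = u1 at *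
  generalize u 2 = u2 at *
  generalize n 0 = n0 at *
  generalize n 1 = n1 at *
  generalize n 2 = n2 at *
  -- Lagrange's identity gives `|(n × ū)_j|² = |u|²|n|² - |u_j|²|n|² - |n_j|²|u|²` modulo `n · u`;
  -- substituting it into the expansion leaves the multiples of `n · u` and its conjugate below.
  linear_combination
    (5 / 2 * I * (u0 * a0 + u1 * a1 + u2 * a2) * (m0 * a0 + m1 * a1 + m2 * a2)
      - 3 * I * (u0 * a0 * m0 * a0 + u1 * a1 * m1 * a1 + u2 * a2 * m2 * a2)) * h
    - 3 * I * (u0 * a0 * n0 * u0 + u1 * a1 * n1 * u1 + u2 * a2 * n2 * u2) * hconj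

/-- A complex plane `n · z = 0` is not invariant under `∇R`: invariance would force
`(∑ |u_k|²)² = 2 ∑ |u_k|⁴` for each of its vectors `u`. -/
lemma complex_case {V : Submodule ℝ C3} {n : C3} (hn : n ≠ 0)
    (hV : ∀ z, z ∈ V ↔ n ⬝ᵥ z = 0)
    (hD : ∀ v ∈ V, ∀ x ∈ V, ∀ y ∈ V, ∀ z ∈ V, nC v x y z ∈ V) : False := by
  have hpos : nrm n ≠ 0 := by
    intro h0
    apply hn
    ext j
    have := (Finset.sum_eq_zero_iff_of_nonneg (fun k _ => normSq_nonneg (n k))).1 h0 j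
      (Finset.mem_univ j)
    simpa using this
  have key : ∀ u, n ⬝ᵥ u = 0 → nrm u ^ 2 = 2 * ∑ k, normSq (u k) ^ 2 := by
    intro u hu
    have h1 : u ∈ V := (hV u).2 hu
    have h2 : I • u ∈ V := (hV _).2 (by rw [dotProduct_smul, hu, smul_zero])
    have h3 : n ⨯₃ star u ∈ V := (hV _).2 (dot_self_cross _ _)
    have h4 := (hV _).1 (hD u h1 u h1 _ h2 _ h3)
    rw [complex_case_identity hu] at h4
    have h5 : nrm n * (nrm u ^ 2 - 2 * ∑ k, normSq (u k) ^ 2) = 0 := by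
      simpa [-ofReal_mul, -ofReal_sub] using h4
    have := (mul_eq_zero.1 h5).resolve_left hpos
    linarith
  -- The first two vectors give `|n₀| = |n₁| = |n₂|`. The third is `n₂ (n₁, -n₀, 0) + i n₀ (0, n₂, -n₁)`,
  -- whose squared moduli are then in the ratio `1 : 2 : 1`, against the identity.
  have k0 := key ![n 1, -n 0, 0] (by rw [vec3_dotProduct]; simp; ring)
  have k1 := key ![0, n 2, -n 1] (by rw [vec3_dotProduct]; simp; ring)
  have k2 := key ![n 2 * n 1, (I - 1) * n 0 * n 2, -(I * n 0 * n 1)]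
    (by rw [vec3_dotProduct]; simp; ring)
  have hI : normSq (I - 1) = 2 := by simp [normSq_apply]; norm_num
  simp only [nrm, Fin.sum_univ_three, Matrix.cons_val, normSq_neg, normSq_mul, normSq_I, hI,
    normSq_zero] at k0 k1 k2 hpos
  set a := normSq (n 0)
  set b := normSq (n 1)
  set c := normSq (n 2)
  have e0 : a = b := by
    have : (a - b) ^ 2 = 0 := by linarith
    have := pow_eq_zero_iff (two_ne_zero) |>.1 this
    linarith
  have e1 : c = b := by
    have : (c - b) ^ 2 = 0 := by linarith
    have := pow_eq_zero_iff (two_ne_zero) |>.1 this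
    linarith
  rw [e0, e1] at k2 hpos
  have : b ^ 4 = 0 := by linarith
  have : b = 0 := by simpa using this
  apply hpos
  rw [this]; norm_num

/-! ### Subspaces whose maximal complex subspace is a line -/

/-- The curvature `R(w, Jw) w` where `J` is `i` times a real diagonal operator `s`. -/
lemma rC_signed (w : C3) (s : Fin 3 → ℝ) : rC w (fun l => I * (s l * w l)) w = fun l =>
    I * (((-(1 / 4) * nrm w * s l + 9 / 4 * (∑ k, s k * normSq (w k))
      - 6 * s l * normSq (w l) : ℝ) : ℂ) * w l) := by
  ext l
  fin_cases l <;>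
    simp [rC, dC, tC, nrm, cross_apply, Fin.sum_univ_three, map_ofNat, ← mul_conj] <;> ring

/-- If `ℂ u` is the maximal complex subspace of `V`, the operator of `skew_diag_mem` preserves it, so
`u` is an eigenvector and its nonzero coordinates have the same modulus. -/
lemma normSq_eq_of_line {V : Submodule ℝ C3}
    (hR : ∀ x ∈ V, ∀ y ∈ V, ∀ z ∈ V, rC x y z ∈ V)
    {u : C3} (hu : u ∈ V) (hiu : I • u ∈ V)
    (hL : ∀ z ∈ V, I • z ∈ V → ∃ c : ℂ, c • u = z) {i j : Fin 3} (hi : u i ≠ 0) (hj : u j ≠ 0) :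
    normSq (u i) = normSq (u j) := by
  have h1 := skew_diag_mem hR hu hiu hu
  have h2 := skew_diag_mem hR hu hiu hiu
  obtain ⟨c, hc⟩ := hL _ h1 (by
    convert h2 using 1
    ext l
    simp only [Pi.smul_apply, smul_eq_mul]
    ring)
  have h3 : ∀ l, u l ≠ 0 → c = I * ((nrm u - 4 * normSq (u l) : ℝ) : ℂ) := fun l hl => by
    have := congrFun hc l
    simp only [Pi.smul_apply, smul_eq_mul] at this
    apply mul_right_cancel₀ hl
    rw [this]; ring
  have h4 := (h3 i hi).symm.trans (h3 j hj)
  have h5 := ofReal_injective (mul_left_cancel₀ I_ne_zero h4)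
  linarith

/-- If `u` is supported on one coordinate, the operator of `skew_diag_mem` is a real multiple of `i`
modulo `ℂ u`. -/
lemma complex_of_support_one {V : Submodule ℝ C3}
    (hR : ∀ x ∈ V, ∀ y ∈ V, ∀ z ∈ V, rC x y z ∈ V)
    {u : C3} (hu : u ∈ V) (hiu : I • u ∈ V) (k : Fin 3) (hk : u k ≠ 0)
    (h0 : ∀ l, l ≠ k → u l = 0) : ∀ z ∈ V, I • z ∈ V := by
  intro z hz
  have hp : normSq (u k) ≠ 0 := by simpa using hk
  have hN : nrm u = normSq (u k) := by
    rw [nrm, Finset.sum_eq_single k] <;> simp +contextual [h0]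
  convert add_mem (V.smul_mem (normSq (u k))⁻¹ (skew_diag_mem hR hu hiu hz))
    (smul_mem_of_J hu hiu (4 * I * z k / u k)) using 1
  have hp' : (normSq (u k) : ℂ) ≠ 0 := by exact_mod_cast hp
  ext l
  simp only [Pi.smul_apply, Pi.add_apply, smul_eq_mul, Complex.real_smul, hN]
  by_cases hl : l = k
  · subst hl
    push_cast
    field_simp
    ring
  · rw [h0 l hl]
    push_cast
    simp only [map_zero, ofReal_zero]
    field_simp
    ring

/-- If no coordinate of `u` vanishes, the operator of `skew_diag_mem` is a real multiple of `i`. -/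
lemma complex_of_support_three {V : Submodule ℝ C3}
    (hR : ∀ x ∈ V, ∀ y ∈ V, ∀ z ∈ V, rC x y z ∈ V)
    {u : C3} (hu : u ∈ V) (hiu : I • u ∈ V)
    (hL : ∀ z ∈ V, I • z ∈ V → ∃ c : ℂ, c • u = z)
    (h0 : ∀ l, u l ≠ 0) : ∀ z ∈ V, I • z ∈ V := by
  intro z hz
  have hp : normSq (u 0) ≠ 0 := by simpa using h0 0
  have hq : ∀ l, normSq (u l) = normSq (u 0) := fun l =>
    normSq_eq_of_line hR hu hiu hL (h0 l) (h0 0)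
  have hN : nrm u = 3 * normSq (u 0) := by
    simp [nrm, hq]
  convert V.smul_mem (-(normSq (u 0))⁻¹) (skew_diag_mem hR hu hiu hz) using 1
  have hp' : (normSq (u 0) : ℂ) ≠ 0 := by exact_mod_cast hp
  ext l
  simp only [Pi.smul_apply, smul_eq_mul, Complex.real_smul, hN, hq]
  push_cast
  field_simp
  ring

/-- If `u` is supported on two coordinates, the operator of `skew_diag_mem` is a real multiple of
`J = i diag(-1, -1, 1)`, up to reordering. For `w ∈ V` orthogonal to `u`, a combination of
`R(w, Jw) w` and `J w` is a nonzero multiple of `i w_k e_k`, which forces `w_k = 0` and hence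
`J w = -i w`. -/
lemma complex_of_support_two {V : Submodule ℝ C3}
    (hR : ∀ x ∈ V, ∀ y ∈ V, ∀ z ∈ V, rC x y z ∈ V)
    {u : C3} (hu : u ∈ V) (hiu : I • u ∈ V)
    (hL : ∀ z ∈ V, I • z ∈ V → ∃ c : ℂ, c • u = z)
    (i j k : Fin 3) (hik : i ≠ k) (hjk : j ≠ k)
    (hall : ∀ l, l = i ∨ l = j ∨ l = k) (hsum : ∀ f : Fin 3 → ℝ, ∑ l, f l = f i + f j + f k)
    (hi : u i ≠ 0) (hj : u j ≠ 0) (hk : u k = 0) : ∀ z ∈ V, I • z ∈ V := by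
  have hp : normSq (u i) ≠ 0 := by simpa using hi
  have hp' : (normSq (u i) : ℂ) ≠ 0 := by exact_mod_cast hp
  have hij : normSq (u j) = normSq (u i) := normSq_eq_of_line hR hu hiu hL hj hi
  have hN : nrm u = 2 * normSq (u i) := by
    rw [nrm, hsum, hij, hk, map_zero]; ring
  set s : Fin 3 → ℝ := fun l => if l = k then 1 else -1 with hs
  have si : s i = -1 := by simp [hs, hik]
  have sj : s j = -1 := by simp [hs, hjk]
  have sk : s k = 1 := by simp [hs]
  have hJ : ∀ z ∈ V, (fun l => I * (s l * z l)) ∈ V := by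
    intro z hz
    convert V.smul_mem (2 * normSq (u i))⁻¹ (skew_diag_mem hR hu hiu hz) using 1
    ext l
    simp only [Pi.smul_apply, Complex.real_smul, hN]
    rcases hall l with rfl | rfl | rfl
    · rw [si]; push_cast; field_simp; ring
    · rw [sj, hij]; push_cast; field_simp; ring
    · rw [sk, hk]; push_cast; rw [map_zero, ofReal_zero]; field_simp; ring
  have main : ∀ w ∈ V, conj (u i) * w i + conj (u j) * w j = 0 → I • w ∈ V := by
    intro w hw how
    have hq : normSq (w j) = normSq (w i) := by
      have h1 : conj (u i) * w i = -(conj (u j) * w j) := eq_neg_of_add_eq_zero_left how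
      have h2 := congrArg normSq h1
      simp only [normSq_neg, normSq_mul, normSq_conj, hij] at h2
      exact (mul_left_cancel₀ hp h2).symm
    by_cases hwk : w k = 0
    · convert neg_mem (hJ w hw) using 1
      ext l
      simp only [Pi.smul_apply, Pi.neg_apply, smul_eq_mul]
      rcases hall l with rfl | rfl | rfl
      · rw [si]; push_cast; ring
      · rw [sj]; push_cast; ring
      · rw [hwk]; ring
    exfalso
    -- The coefficient of `J w` below is chosen to cancel the coordinates `i` and `j` of `R(w, Jw) w`.
    have hJw := hJ w hw
    have hr := hR w hw _ hJw w hw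
    rw [rC_signed] at hr
    set q := normSq (w i) with hqd
    set g := normSq (w k) with hgd
    have hNw : nrm w = 2 * q + g := by rw [nrm, hsum, hq]; ring
    have hQ : ∑ l, s l * normSq (w l) = g - 2 * q := by
      rw [hsum, si, sj, sk, hq]; ring
    have hy : (fun l => if l = k then -(3 / 2 * (2 * q + g) : ℝ) * (I * w k) else 0) ∈ V := by
      convert add_mem hr (V.smul_mem (nrm w / 4 + (9 / 4 * g + 3 / 2 * q)) hJw) using 1
      ext l
      simp only [Pi.smul_apply, Pi.add_apply, Complex.real_smul, hQ, hNw]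
      rcases hall l with rfl | rfl | rfl
      · rw [if_neg hik, si, ← hqd]; push_cast; ring
      · rw [if_neg hjk, sj, hq]; push_cast; ring
      · rw [if_pos rfl, sk, ← hgd]; push_cast; ring
    obtain ⟨c, hc⟩ := hL _ hy (by
      convert hJ _ hy using 1
      ext l
      simp only [Pi.smul_apply, smul_eq_mul]
      split_ifs with h
      · rw [h, sk]; push_cast; ring
      · simp)
    have hck := congrFun hc k
    simp only [Pi.smul_apply, smul_eq_mul, hk, mul_zero, if_true] at hck
    have hgpos : 0 < g := normSq_pos.2 hwk
    have hqn : 0 ≤ q := normSq_nonneg _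
    have hne : ((3 / 2 * (2 * q + g) : ℝ) : ℂ) ≠ 0 := by
      exact_mod_cast (by positivity : (3 / 2 * (2 * q + g) : ℝ) ≠ 0)
    exact mul_ne_zero (neg_ne_zero.2 hne) (mul_ne_zero I_ne_zero hwk) hck.symm
  intro z hz
  -- Subtract from `z` its Hermitian projection to `ℂ u`.
  set c : ℂ := (conj (u i) * z i + conj (u j) * z j) / (2 * normSq (u i)) with hc
  have h1 := main (z - c • u) (sub_mem hz (smul_mem_of_J hu hiu c)) (by
    have e1 : conj (u i) * u i = normSq (u i) := by rw [mul_comm, mul_conj]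
    have e2 : conj (u j) * u j = normSq (u i) := by rw [mul_comm, mul_conj, hij]
    have e3 : c * (2 * normSq (u i)) = conj (u i) * z i + conj (u j) * z j := by
      rw [hc]; field_simp
    simp only [Pi.sub_apply, Pi.smul_apply, smul_eq_mul]
    linear_combination (-c) * e1 - c * e2 - e3)
  have h2 := add_mem h1 (smul_mem_of_J hu hiu (I * c))
  convert h2 using 1
  rw [smul_sub, smul_smul]
  abel

/-- If the maximal complex subspace of an `R`-invariant `V` contains `u ≠ 0` and lies in `ℂ u`, then
`V` is itself complex. -/
lemma complex_of_line {V : Submodule ℝ C3}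
    (hR : ∀ x ∈ V, ∀ y ∈ V, ∀ z ∈ V, rC x y z ∈ V)
    {u : C3} (hu0 : u ≠ 0) (hu : u ∈ V) (hiu : I • u ∈ V)
    (hL : ∀ z ∈ V, I • z ∈ V → ∃ c : ℂ, c • u = z) : ∀ z ∈ V, I • z ∈ V := by
  have two := complex_of_support_two hR hu hiu hL
  have one := complex_of_support_one hR hu hiu
  by_cases h0 : u 0 = 0 <;> by_cases h1 : u 1 = 0 <;> by_cases h2 : u 2 = 0
  · exact absurd (by ext l; fin_cases l <;> assumption) hu0
  · exact one 2 h2 (by intro l hl; fin_cases l <;> simp_all)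
  · exact one 1 h1 (by intro l hl; fin_cases l <;> simp_all)
  · exact two 1 2 0 (by decide) (by decide) (by decide)
      (fun f => by rw [Fin.sum_univ_three]; ring) h1 h2 h0
  · exact one 0 h0 (by intro l hl; fin_cases l <;> simp_all)
  · exact two 0 2 1 (by decide) (by decide) (by decide)
      (fun f => by rw [Fin.sum_univ_three]; ring) h0 h2 h1
  · exact two 0 1 2 (by decide) (by decide) (by decide)
      (fun f => by rw [Fin.sum_univ_three]) h0 h1 h2
  · exact complex_of_support_three hR hu hiu hL (by intro l; fin_cases l <;> assumption)

/-! ### Dimension count and conclusion -/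

/-- The maximal complex subspace `V ∩ iV` of a real subspace `V`. -/
def maxC (V : Submodule ℝ C3) : Submodule ℂ C3 where
  carrier := {z | z ∈ V ∧ I • z ∈ V}
  add_mem' {a b} ha hb := ⟨add_mem ha.1 hb.1, by rw [smul_add]; exact add_mem ha.2 hb.2⟩
  zero_mem' := ⟨zero_mem V, by rw [smul_zero]; exact zero_mem V⟩
  smul_mem' c z hz := by
    refine ⟨smul_mem_of_J hz.1 hz.2 c, ?_⟩
    rw [smul_smul]
    exact smul_mem_of_J hz.1 hz.2 _

lemma finrank_restrict (L : Submodule ℂ C3) :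
    Module.finrank ℝ (L.restrictScalars ℝ) = 2 * Module.finrank ℂ L := by
  have := Module.finrank_mul_finrank ℝ ℂ L
  rw [Complex.finrank_real_complex] at this
  exact this.symm

/-- A real 4-dimensional subspace of `ℂ³` meets its multiple by `i` in dimension at least
`4 + 4 - 6 = 2`. -/
lemma finrank_maxC {V : Submodule ℝ C3} (hV : Module.finrank ℝ V = 4) :
    2 ≤ Module.finrank ℝ ((maxC V).restrictScalars ℝ) := by
  let J : C3 ≃ₗ[ℝ] C3 := (LinearEquiv.smulOfNeZero ℂ C3 I I_ne_zero).restrictScalars ℝ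
  have h1 : (maxC V).restrictScalars ℝ = V ⊓ V.comap (J : C3 →ₗ[ℝ] C3) := rfl
  have h2 : Module.finrank ℝ (V.comap (J : C3 →ₗ[ℝ] C3)) = 4 := by
    rw [Submodule.comap_equiv_eq_map_symm, LinearEquiv.finrank_map_eq, hV]
  have h3 := Submodule.finrank_sup_add_finrank_inf_eq V (V.comap (J : C3 →ₗ[ℝ] C3))
  have h4 := Submodule.finrank_le (V ⊔ V.comap (J : C3 →ₗ[ℝ] C3))
  have h5 : Module.finrank ℝ C3 = 6 := by
    rw [← Module.finrank_mul_finrank ℝ ℂ C3, Complex.finrank_real_complex]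
    simp
  rw [h1]
  omega

/-- The result in the model `ℂ³`. -/
theorem core {V : Submodule ℝ C3} (hV : Module.finrank ℝ V = 4)
    (hR : ∀ x ∈ V, ∀ y ∈ V, ∀ z ∈ V, rC x y z ∈ V)
    (hD : ∀ v ∈ V, ∀ x ∈ V, ∀ y ∈ V, ∀ z ∈ V, nC v x y z ∈ V) : False := by
  have hle : (maxC V).restrictScalars ℝ ≤ V := fun z hz => hz.1
  have h2 := finrank_maxC hV
  have h4 := Submodule.finrank_mono hle
  have hf := finrank_restrict (maxC V)
  have hcx : (maxC V).restrictScalars ℝ = V := by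
    obtain h | h : Module.finrank ℂ (maxC V) = 1 ∨ Module.finrank ℂ (maxC V) = 2 := by omega
    · obtain ⟨⟨u, hu, hiu⟩, hu0, hgen⟩ := finrank_eq_one_iff'.1 h
      have hcx := complex_of_line hR (u := u) (fun h => hu0 (Subtype.ext h)) hu hiu
        (fun z hz hiz => by
          obtain ⟨c, hc⟩ := hgen ⟨z, hz, hiz⟩
          exact ⟨c, congrArg Subtype.val hc⟩)
      exact le_antisymm hle fun z hz => ⟨hz, hcx z hz⟩
    · exact Submodule.eq_of_le_of_finrank_eq hle (by rw [hf, h, hV])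
  have h : Module.finrank ℂ (maxC V) = 2 := by rw [hcx] at hf; omega
  have hlt : maxC V < ⊤ := lt_top_iff_ne_top.2 fun ht => by
    rw [ht, finrank_top] at h
    simp at h
  obtain ⟨f, hf0, hker⟩ := Submodule.exists_le_ker_of_lt_top _ hlt
  have hk := Module.Dual.finrank_ker_add_one_of_ne_zero (f := f) hf0
  have heq : maxC V = LinearMap.ker f := Submodule.eq_of_le_of_finrank_eq hker (by
    simp at hk
    omega)
  have hfn : ∀ z, f z = (fun l => f (Pi.single l 1)) ⬝ᵥ z := fun z => by
    conv_lhs => rw [pi_eq_sum_univ' z]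
    simp [dotProduct, mul_comm]
  refine complex_case (V := V) (n := fun l => f (Pi.single l 1)) ?_ ?_ hD
  · intro h0
    apply hf0
    ext z
    simpa using congrFun h0 z
  · intro z
    rw [← hfn, ← LinearMap.mem_ker, ← heq]
    conv_lhs => rw [← hcx]
    rfl

/-- There is no 4-dimensional subspace of `𝔭` invariant under
`R` and `∇R`: the nearly Kähler flag manifold `F(ℂ³)` has no codimension-two
totally geodesic submanifolds. -/
theorem no_four_dimensional_invariant_subspace_FC3
    (πt πp : M3 → M3)
    (hdec : ∀ Z ∈ gAlg, πt Z ∈ tAlg ∧ πp Z ∈ pAlg ∧ πt Z + πp Z = Z) :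
    ¬ ∃ v : Submodule ℝ M3, Module.finrank ℝ v = 4 ∧ v ≤ pAlg ∧
      (∀ X ∈ v, ∀ Y ∈ v, ∀ Z ∈ v, Rmap πt πp X Y Z ∈ v) ∧
      (∀ V ∈ v, ∀ X ∈ v, ∀ Y ∈ v, ∀ Z ∈ v, nablaR πt πp V X Y Z ∈ v) := by
  rintro ⟨v, hv4, hvp, hR, hD⟩
  have hmap : (v.comap toML).map toML = v :=
    Submodule.map_comap_eq_self (by rw [range_toML]; exact hvp)
  refine core (V := v.comap toML) ?_ ?_ ?_
  · rw [← hv4]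
    conv_rhs => rw [← hmap]
    exact (Submodule.equivMapOfInjective toML toML_inj _).finrank_eq
  · intro x hx y hy z hz
    have := hR _ hx _ hy _ hz
    rw [Submodule.mem_comap]
    change toM _ ∈ v
    rw [← Rmap_toM hdec]
    exact this
  · intro w hw x hx y hy z hz
    have := hD _ hw _ hx _ hy _ hz
    rw [Submodule.mem_comap]
    change toM _ ∈ v
    rw [← nablaR_toM hdec]
    exact this

end
end

section
/- The subspace 𝔳 = span{e₁ + e₃, e₂ − e₄, e₆} ⊆ 𝔭 is D-invariant (D_X Y ∈ 𝔳 for all X, Y ∈ 𝔳), and the subspace span{[X,Y] : X, Y ∈ 𝔳} + 𝔳 equals the 4-dimensional Lie subalgebra 𝔲(2)_{(1,0,1)} = {X ∈ 𝔰𝔲(3) : X·(1,0,1)ᵀ ∈ ℝ·i(1,0,1)ᵀ}, which is canonically embedded (it equals (𝔲(2)_{(1,0,1)} ∩ 𝔱) ⊕ (𝔲(2)_{(1,0,1)} ∩ 𝔭)) and satisfies 𝔲(2)_{(1,0,1)} ∩ 𝔭 = 𝔳. (This yields the Lagrangian totally geodesic Berger sphere S³_{ℂ,1/4}(√2) in nearly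 Kähler F(ℂ³) as an orbit of U(2)_{(1,0,1)}.) -/
/-!
An element of `𝔲(2)_{(1,0,1)}` has the form
`!![ia, w, id; -w̄, -2ia, w̄; id, -w, ia]` with `a, d` real and `w = b + ci` complex, and `𝔳` is
the part with `a = 0`. Everything follows from this parametrization by `ℝ⁴`: it is linear and
injective (`uMap_injective`), so its range has dimension 4; its range is closed under brackets
(`lie_uMat`); and `[𝔳, 𝔳] + 𝔳` is the whole range (`sup_eq_range`), since the bracket of
the first two generators of `𝔳` supplies the missing direction `diag(i, -2i, i)` modulo `𝔳`.
Matrices in `𝔱` vanish off the diagonal and those in `𝔭` vanish on it, so the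
components in `𝔱` and `𝔭` of such a matrix are its diagonal and off-diagonal parts.
-/

/- Setup: the homogeneous nearly Kähler flag manifold F(ℂ³) = SU(3)/T². -/

noncomputable section
open Matrix

/-- the tangent space `𝔳 = span{e₁+e₃, e₂−e₄, e₆}` of the Berger sphere. -/
def vSub : Submodule ℝ M3 := Submodule.span ℝ {e1 + e3, e2 - e4, e6}

/-- `span{[X,Y] : X, Y ∈ 𝔳}`. -/
def bracketSpan : Submodule ℝ M3 :=
  Submodule.span ℝ {z : M3 | ∃ x ∈ vSub, ∃ y ∈ vSub, z = ⁅x, y⁆}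

/-- `𝔲(2)_{(1,0,1)} = {X ∈ 𝔰𝔲(3) : X·(1,0,1)ᵀ ∈ ℝ·i(1,0,1)ᵀ}` as a set. -/
def u2Set : Set M3 :=
  {X : M3 | X ∈ gAlg ∧ ∃ a : ℝ, X.mulVec ![1, 0, 1] = a • (Complex.I • ![1, 0, 1])}

/-- The general element of `𝔲(2)_{(1,0,1)}`, with real parameters `a` (diagonal part),
`b + ci` (the entry `(1,2)`) and `d` (the entry `(1,3)` divided by `i`). -/
def uMat (a b c d : ℝ) : M3 :=
  !![a * Complex.I, b + c * Complex.I, d * Complex.I;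
    -b + c * Complex.I, -2 * a * Complex.I, b - c * Complex.I;
    d * Complex.I, -b - c * Complex.I, a * Complex.I]

/-- The parametrization `uMat` of `𝔲(2)_{(1,0,1)}` as a linear map on `ℝ⁴`. -/
def uMap : (Fin 4 → ℝ) →ₗ[ℝ] M3 where
  toFun x := uMat (x 0) (x 1) (x 2) (x 3)
  map_add' x y := by
    ext i j
    fin_cases i <;> fin_cases j <;> simp [uMat] <;> ring
  map_smul' r x := by
    ext i j
    fin_cases i <;> fin_cases j <;> simp [uMat] <;> ring

lemma mem_range_uMap {X : M3} :
    X ∈ LinearMap.range uMap ↔ ∃ a b c d, X = uMat a b c d := by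
  constructor
  · rintro ⟨x, rfl⟩
    exact ⟨x 0, x 1, x 2, x 3, rfl⟩
  · rintro ⟨a, b, c, d, rfl⟩
    exact ⟨![a, b, c, d], rfl⟩

lemma uMap_injective : Function.Injective uMap := by
  intro x y h
  have h' : uMat (x 0) (x 1) (x 2) (x 3) = uMat (y 0) (y 1) (y 2) (y 3) := h
  have h00 := congrArg Complex.im (congrFun (congrFun h' 0) 0)
  have h01 := congrArg Complex.re (congrFun (congrFun h' 0) 1)
  have h01' := congrArg Complex.im (congrFun (congrFun h' 0) 1)
  have h02 := congrArg Complex.im (congrFun (congrFun h' 0) 2)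
  simp [uMat] at h00 h01 h01' h02
  funext i
  fin_cases i <;> assumption

lemma sqrt_two_inv_mul (b : ℝ) : (b : ℂ) * (√2 : ℝ) * ((√2 : ℝ) : ℂ)⁻¹ = b := by
  have : ((√2 : ℝ) : ℂ) ≠ 0 := by
    exact_mod_cast (Real.sqrt_pos.mpr (by norm_num : (0 : ℝ) < 2)).ne'
  rw [mul_assoc, mul_inv_cancel₀ this, mul_one]

/-- The generators of `𝔳` carry a factor `1/√2`, which the coefficients here absorb. -/
lemma uMat_zero_eq (b c d : ℝ) :
    uMat 0 b c d = (b * √2) • (e1 + e3) + (c * √2) • (e2 - e4) + (d * √2) • e6 := by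
  have hc := sqrt_two_inv_mul c
  have hd := sqrt_two_inv_mul d
  ext i j
  fin_cases i <;> fin_cases j <;>
    simp [uMat, e1, e2, e3, e4, e6] <;>
    first
    | linear_combination -Complex.I * hc
    | linear_combination Complex.I * hc
    | linear_combination -Complex.I * hd

lemma mem_vSub {X : M3} : X ∈ vSub ↔ ∃ b c d, X = uMat 0 b c d := by
  have hs : √2 ≠ 0 := (Real.sqrt_pos.mpr (by norm_num : (0 : ℝ) < 2)).ne'
  rw [vSub, Submodule.mem_span_triple]
  constructor
  · rintro ⟨b, c, d, rfl⟩
    refine ⟨b / √2, c / √2, d / √2, ?_⟩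
    rw [uMat_zero_eq, div_mul_cancel₀ _ hs, div_mul_cancel₀ _ hs, div_mul_cancel₀ _ hs]
  · rintro ⟨b, c, d, rfl⟩
    exact ⟨_, _, _, (uMat_zero_eq b c d).symm⟩

lemma mem_tAlg {X : M3} :
    X ∈ tAlg ↔ ∃ s t : ℝ,
      X = !![s * Complex.I, 0, 0; 0, (t - s) * Complex.I, 0; 0, 0, -t * Complex.I] := by
  rw [tAlg, Submodule.mem_span_pair]
  refine exists_congr fun s => exists_congr fun t => ?_
  rw [eq_comm]
  refine Eq.congr rfl ?_
  ext i j
  fin_cases i <;> fin_cases j <;> simp [Matrix.diagonal] <;> ring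

/-- Coordinates of an element of `𝔭`; the real numbers `x k` are the coefficients of
`e₁, …, e₆` divided by `√2`. -/
lemma exists_of_mem_pAlg {X : M3} (hX : X ∈ pAlg) :
    ∃ x : Fin 6 → ℝ, X =
      !![0, x 0 + x 1 * Complex.I, x 4 + x 5 * Complex.I;
        -x 0 + x 1 * Complex.I, 0, x 2 + x 3 * Complex.I;
        -x 4 + x 5 * Complex.I, -x 2 + x 3 * Complex.I, 0] := by
  simp only [pAlg, Submodule.mem_span_insert, Submodule.mem_span_singleton] at hX
  obtain ⟨a, _, ⟨b, _, ⟨c, _, ⟨d, _, ⟨e, _, ⟨f, rfl⟩, rfl⟩, rfl⟩, rfl⟩, rfl⟩, rfl⟩ := hX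
  refine ⟨![a * (√2)⁻¹, b * (√2)⁻¹, c * (√2)⁻¹, d * (√2)⁻¹, e * (√2)⁻¹, f * (√2)⁻¹], ?_⟩
  ext i j
  fin_cases i <;> fin_cases j <;> simp [e1, e2, e3, e4, e5, e6] <;> ring

lemma vSub_le_pAlg : vSub ≤ pAlg := by
  have h : ∀ x ∈ ({e1, e2, e3, e4, e5, e6} : Set M3), x ∈ pAlg :=
    fun x hx => Submodule.subset_span hx
  rw [vSub, Submodule.span_le]
  rintro x (rfl | rfl | rfl)
  · exact pAlg.add_mem (h _ (by simp)) (h _ (by simp))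
  · exact pAlg.sub_mem (h _ (by simp)) (h _ (by simp))
  · exact h _ (by simp)

lemma uMat_diag_mem_tAlg (a : ℝ) : uMat a 0 0 0 ∈ tAlg := by
  rw [mem_tAlg]
  refine ⟨a, -a, ?_⟩
  ext i j
  fin_cases i <;> fin_cases j <;> simp [uMat]
  ring

lemma uMat_split (a b c d : ℝ) : uMat a b c d = uMat a 0 0 0 + uMat 0 b c d := by
  ext i j
  fin_cases i <;> fin_cases j <;> simp [uMat]

lemma uMat_mem_gAlg (a b c d : ℝ) : uMat a b c d ∈ gAlg := by
  rw [uMat_split]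
  exact Submodule.add_mem_sup (uMat_diag_mem_tAlg a)
    (vSub_le_pAlg (mem_vSub.mpr ⟨b, c, d, rfl⟩))

lemma lie_uMat (a b c d a' b' c' d' : ℝ) :
    ⁅uMat a b c d, uMat a' b' c' d'⁆ =
      uMat (2 * (b * c' - c * b'))
        (-(3 * (a * c' - a' * c) - d * c' + d' * c))
        (3 * (a * b' - a' * b) - d * b' + d' * b)
        (2 * (c * b' - b * c')) := by
  have hI : Complex.I ^ 2 = -1 := Complex.I_sq
  rw [Ring.lie_def]
  ext i j
  fin_cases i <;> fin_cases j <;>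
    simp [uMat] <;> ring_nf <;>
    simp only [hI] <;> ring

/-- The `𝔭`-component of an element of `𝔲(2)_{(1,0,1)}` is its off-diagonal part. -/
lemma pAlg_component {T P : M3} {a b c d : ℝ} (hT : T ∈ tAlg) (hP : P ∈ pAlg)
    (h : T + P = uMat a b c d) : P = uMat 0 b c d := by
  obtain ⟨s, t, rfl⟩ := mem_tAlg.mp hT
  obtain ⟨x, rfl⟩ := exists_of_mem_pAlg hP
  ext i j
  have hij := congrFun (congrFun h i) j
  fin_cases i <;> fin_cases j <;> simp [uMat] at hij ⊢ <;> exact hij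

lemma sup_eq_range : bracketSpan ⊔ vSub = LinearMap.range uMap := by
  apply le_antisymm
  · refine sup_le (Submodule.span_le.mpr ?_) ?_
    · rintro _ ⟨x, hx, y, hy, rfl⟩
      obtain ⟨b, c, d, rfl⟩ := mem_vSub.mp hx
      obtain ⟨b', c', d', rfl⟩ := mem_vSub.mp hy
      rw [lie_uMat]
      exact mem_range_uMap.mpr ⟨_, _, _, _, rfl⟩
    · intro X hX
      obtain ⟨b, c, d, rfl⟩ := mem_vSub.mp hX
      exact mem_range_uMap.mpr ⟨_, _, _, _, rfl⟩
  · intro X hX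
    obtain ⟨a, b, c, d, rfl⟩ := mem_range_uMap.mp hX
    -- `⁅uMat 0 1 0 0, uMat 0 0 1 0⁆ = uMat 2 0 0 (-2)`, which explains the `a / 2` and `d + a`.
    have h : uMat a b c d =
        (a / 2) • ⁅uMat 0 1 0 0, uMat 0 0 1 0⁆ + uMat 0 b c (d + a) := by
      rw [lie_uMat]
      ext i j
      fin_cases i <;> fin_cases j <;> simp [uMat] <;> ring
    rw [h]
    refine Submodule.add_mem_sup (Submodule.smul_mem _ _ (Submodule.subset_span ?_))
      (mem_vSub.mpr ⟨_, _, _, rfl⟩)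
    exact ⟨_, mem_vSub.mpr ⟨_, _, _, rfl⟩, _, mem_vSub.mpr ⟨_, _, _, rfl⟩, rfl⟩

lemma range_eq_u2Set : (LinearMap.range uMap : Set M3) = u2Set := by
  ext X
  rw [SetLike.mem_coe, mem_range_uMap]
  constructor
  · rintro ⟨a, b, c, d, rfl⟩
    refine ⟨uMat_mem_gAlg a b c d, a + d, ?_⟩
    ext i
    fin_cases i <;> simp [uMat, Matrix.mulVec, dotProduct, Fin.sum_univ_three] <;> ring
  · rintro ⟨hX, r, hr⟩
    obtain ⟨T, hT, P, hP, rfl⟩ := Submodule.mem_sup.mp hX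
    obtain ⟨s, t, rfl⟩ := mem_tAlg.mp hT
    obtain ⟨x, rfl⟩ := exists_of_mem_pAlg hP
    have h0 := congrFun hr 0
    have h1 := congrFun hr 1
    have h2 := congrFun hr 2
    simp [Matrix.mulVec, dotProduct, Fin.sum_univ_three, Complex.ext_iff] at h0 h1 h2
    obtain ⟨h0r, h0i⟩ := h0
    obtain ⟨h1r, h1i⟩ := h1
    have hx2 : x 2 = x 0 := by linarith
    have hx3 : x 3 = -x 1 := by linarith
    have hx4 : x 4 = 0 := by linarith
    have ht : t = -s := by linarith
    refine ⟨s, x 0, x 1, x 5, ?_⟩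
    subst ht
    ext i j
    fin_cases i <;> fin_cases j <;> simp [uMat, hx2, hx3, hx4] <;> ring

/-- The subspace `𝔳 = span{e₁+e₃, e₂−e₄, e₆} ⊆ 𝔭` is
`D`-invariant, and `span{[X,Y] : X,Y ∈ 𝔳} + 𝔳` equals the 4-dimensional
Lie subalgebra `𝔲(2)_{(1,0,1)}`, which is canonically embedded and meets `𝔭`
exactly in `𝔳`. -/
theorem berger_sphere_FC3_D_invariant_and_u2
    (πt πp : M3 → M3)
    (hdec : ∀ Z ∈ gAlg, πt Z ∈ tAlg ∧ πp Z ∈ pAlg ∧ πt Z + πp Z = Z) :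
    (∀ X ∈ vSub, ∀ Y ∈ vSub, Dmap πp X Y ∈ vSub) ∧
    Module.finrank ℝ (bracketSpan ⊔ vSub : Submodule ℝ M3) = 4 ∧
    (∀ X ∈ bracketSpan ⊔ vSub, ∀ Y ∈ bracketSpan ⊔ vSub, ⁅X, Y⁆ ∈ bracketSpan ⊔ vSub) ∧
    ((bracketSpan ⊔ vSub : Submodule ℝ M3) : Set M3) = u2Set ∧
    bracketSpan ⊔ vSub =
      ((bracketSpan ⊔ vSub) ⊓ tAlg) ⊔ ((bracketSpan ⊔ vSub) ⊓ pAlg) ∧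
    (bracketSpan ⊔ vSub) ⊓ pAlg = vSub := by
  refine ⟨?_, ?_, ?_, ?_, ?_, ?_⟩
  · intro X hX Y hY
    obtain ⟨b, c, d, rfl⟩ := mem_vSub.mp hX
    obtain ⟨b', c', d', rfl⟩ := mem_vSub.mp hY
    rw [Dmap, lie_uMat]
    obtain ⟨hT, hP, h⟩ := hdec _ (uMat_mem_gAlg _ _ _ _)
    rw [pAlg_component hT hP h]
    exact vSub.smul_mem _ (mem_vSub.mpr ⟨_, _, _, rfl⟩)
  · rw [sup_eq_range, LinearMap.finrank_range_of_inj uMap_injective, Module.finrank_fin_fun]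
  · rw [sup_eq_range]
    intro X hX Y hY
    obtain ⟨a, b, c, d, rfl⟩ := mem_range_uMap.mp hX
    obtain ⟨a', b', c', d', rfl⟩ := mem_range_uMap.mp hY
    rw [lie_uMat]
    exact mem_range_uMap.mpr ⟨_, _, _, _, rfl⟩
  · rw [sup_eq_range, range_eq_u2Set]
  · refine le_antisymm ?_ (sup_le inf_le_left inf_le_left)
    rw [sup_eq_range]
    intro X hX
    obtain ⟨a, b, c, d, rfl⟩ := mem_range_uMap.mp hX
    rw [uMat_split]
    exact Submodule.add_mem_sup
      ⟨mem_range_uMap.mpr ⟨_, _, _, _, rfl⟩, uMat_diag_mem_tAlg a⟩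
      ⟨mem_range_uMap.mpr ⟨_, _, _, _, rfl⟩, vSub_le_pAlg (mem_vSub.mpr ⟨_, _, _, rfl⟩)⟩
  · refine le_antisymm ?_ (le_inf le_sup_right vSub_le_pAlg)
    rw [sup_eq_range]
    rintro X ⟨hX, hP⟩
    obtain ⟨a, b, c, d, rfl⟩ := mem_range_uMap.mp hX
    rw [pAlg_component tAlg.zero_mem hP (zero_add _)]
    exact mem_vSub.mpr ⟨_, _, _, rfl⟩

end
end
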